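/- For every integer n ≥ 1, the function 𝒫_n(z) = ψ_{2n}(z;N) + (1 + a_{2n−1}(N))·ψ_{2n−1}(z;N) (the sieved Jacobi polynomial of the first kind in the variable x = z + 1/z) satisfies, for all z ∈ ℂ with z ≠ 0 and z^{2N} ≠ 1, the eigenvalue equation (L(N)(L(N)𝒫_n))(z) − N(α+β+1)·(L(N)𝒫_n)(z) = n·(n + N(α+β+1))·𝒫_n(z). -/

import Mathlib

open Finset

/-- Monic OPUC associated to a sequence of (real) Verblunsky parameters. -/
noncomputable def Phi (c : ℕ → ℝ) : ℕ → ℂ → ℂ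
  | 0, _ => 1
  | n + 1, z => z * Phi c n z - (c n : ℂ) * z ^ n * Phi c n z⁻¹

/-- CMV Laurent polynomials: ψ_{2m} z = z^m Φ_{2m}(1/z), ψ_{2m+1} z = z^{-m} Φ_{2m+1}(z). -/
noncomputable def psi (c : ℕ → ℝ) (n : ℕ) (z : ℂ) : ℂ :=
  if Even n then z ^ (n / 2) * Phi c n z⁻¹
  else z ^ (-((n / 2 : ℕ) : ℤ)) * Phi c n z

/-- Verblunsky parameters of the Jacobi OPUC. -/
noncomputable def jacobiA (α β : ℝ) (n : ℕ) : ℝ :=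
  -(α + 1 / 2 + (-1 : ℝ) ^ (n + 1) * (β + 1 / 2)) / (n + α + β + 2)

/-- Sieved Verblunsky parameters: a_n(N) = a_{k-1} if n = N k - 1 (k ≥ 1), 0 otherwise. -/
noncomputable def sievedA (α β : ℝ) (N n : ℕ) : ℝ :=
  if N ∣ (n + 1) then jacobiA α β ((n + 1) / N - 1) else 0

/-- The primitive N-th root of unity q = exp(2πi/N). -/
noncomputable def qN (N : ℕ) : ℂ := Complex.exp (2 * Real.pi * Complex.I / N)

/-- The coefficients A_k(z;N) of the Dunkl-type operator L(N). -/
noncomputable def Acoef (α β : ℝ) (N k : ℕ) (z : ℂ) : ℂ :=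
  if Even N then
    ((α : ℂ) + β + 1 + (-1 : ℂ) ^ k * ((α : ℂ) - β)) * z ^ 2 / (qN N ^ k - z ^ 2)
  else
    (((α : ℂ) + β + 1) * z ^ 2 +
        (if Even k then qN N ^ ((k : ℤ) / 2) else qN N ^ (((k : ℤ) - (N : ℤ)) / 2)) *
          ((α : ℂ) - β) * z) /
      (qN N ^ k - z ^ 2)

/-- B(z) = N((α+β+1) z^{2N} + (α-β) z^N)/(z^{2N} - 1). -/
noncomputable def Bfun (α β : ℝ) (N : ℕ) (z : ℂ) : ℂ :=
  (N : ℂ) * (((α : ℂ) + β + 1) * z ^ (2 * N) + ((α : ℂ) - β) * z ^ N) / (z ^ (2 * N) - 1)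

/-- The Dunkl-type operator L(N). -/
noncomputable def Lop (α β : ℝ) (N : ℕ) (f : ℂ → ℂ) : ℂ → ℂ := fun z =>
  z * deriv f z + ∑ k ∈ Finset.range N, Acoef α β N k z * (f (qN N ^ k / z) - f z)

/-- A function ℂ∖{0} → ℂ is a Laurent polynomial. -/
def IsLaurentPoly (f : ℂ → ℂ) : Prop :=
  ∃ (m : ℕ) (p : Polynomial ℂ), ∀ z : ℂ, z ≠ 0 → f z = Polynomial.eval z p / z ^ m

/-- Sieved Jacobi polynomial of the first kind, as a function of z (x = z + 1/z). -/
noncomputable def sievP (α β : ℝ) (N n : ℕ) (z : ℂ) : ℂ :=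
  psi (sievedA α β N) (2 * n) z
    + (1 + (sievedA α β N (2 * n - 1) : ℂ)) * psi (sievedA α β N) (2 * n - 1) z

/-- χ_n(z) = (z - 1/z) Q_{n-1}(x(z)), with Q the sieved Jacobi polynomial of 2nd kind. -/
noncomputable def sievChi (α β : ℝ) (N n : ℕ) (z : ℂ) : ℂ :=
  -psi (sievedA α β N) (2 * n) z
    + (1 - (sievedA α β N (2 * n - 1) : ℂ)) * psi (sievedA α β N) (2 * n - 1) z


lemma Phi_zero' (c : ℕ → ℝ) (z : ℂ) : Phi c 0 z = 1 := by rw [Phi]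

lemma Phi_succ' (c : ℕ → ℝ) (n : ℕ) (z : ℂ) :
    Phi c (n+1) z = z * Phi c n z - (c n : ℂ) * z ^ n * Phi c n z⁻¹ := by rw [Phi]

lemma Phi_diff (c : ℕ → ℝ) (n : ℕ) : ∀ z : ℂ, z ≠ 0 → DifferentiableAt ℂ (Phi c n) z := by
  induction n with
  | zero =>
    intro z _
    have : Phi c 0 = fun _ => 1 := by funext z; exact Phi_zero' c z
    rw [this]; fun_prop
  | succ n ih =>
    intro z hz
    have : Phi c (n+1) = fun z => z * Phi c n z - (c n : ℂ) * z ^ n * Phi c n z⁻¹ := by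
      funext z; exact Phi_succ' c n z
    rw [this]
    have h1 := ih z hz
    have h2 : DifferentiableAt ℂ (fun z => Phi c n z⁻¹) z :=
      DifferentiableAt.comp z (ih z⁻¹ (inv_ne_zero hz)) (differentiableAt_inv hz)
    fun_prop

/-- u_l -/
noncomputable def uF (α β : ℝ) (l : ℕ) (t : ℂ) : ℂ := t ^ l * Phi (jacobiA α β) (2*l) t⁻¹
/-- v_l -/
noncomputable def vF (α β : ℝ) (l : ℕ) (t : ℂ) : ℂ := (t ^ l)⁻¹ * Phi (jacobiA α β) (2*l+1) t

lemma uF_diff (α β : ℝ) (l : ℕ) (t : ℂ) (ht : t ≠ 0) : DifferentiableAt ℂ (uF α β l) t := by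
  unfold uF
  have h2 : DifferentiableAt ℂ (fun z => Phi (jacobiA α β) (2*l) z⁻¹) t :=
      DifferentiableAt.comp t (Phi_diff _ _ t⁻¹ (inv_ne_zero ht)) (differentiableAt_inv ht)
  fun_prop

lemma vF_diff (α β : ℝ) (l : ℕ) (t : ℂ) (ht : t ≠ 0) : DifferentiableAt ℂ (vF α β l) t := by
  unfold vF
  have h2 := Phi_diff (jacobiA α β) (2*l+1) t ht
  have : t ^ l ≠ 0 := pow_ne_zero _ ht
  fun_prop (disch := assumption)

lemma vF_eq (α β : ℝ) (l : ℕ) (t : ℂ) (ht : t ≠ 0) :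
    vF α β l t = t * uF α β l t⁻¹ - (jacobiA α β (2*l) : ℂ) * uF α β l t := by
  unfold vF uF
  rw [Phi_succ', inv_inv, pow_mul', inv_pow]
  generalize Phi (jacobiA α β) (2*l) t⁻¹ = A
  generalize Phi (jacobiA α β) (2*l) t = B
  have : t ^ l ≠ 0 := pow_ne_zero _ ht
  field_simp

lemma uF_succ (α β : ℝ) (l : ℕ) (t : ℂ) (ht : t ≠ 0) :
    uF α β (l+1) t = vF α β l t⁻¹ - (jacobiA α β (2*l+1) : ℂ) * vF α β l t := by
  unfold vF uF
  rw [show 2 * (l+1) = (2*l+1)+1 by ring, Phi_succ', inv_inv, inv_pow, inv_pow]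
  have : t ^ l ≠ 0 := pow_ne_zero _ ht
  generalize Phi (jacobiA α β) (2*l+1) t⁻¹ = A
  generalize Phi (jacobiA α β) (2*l+1) t = B
  field_simp
  ring

noncomputable def cF (α β : ℝ) (t : ℂ) : ℂ :=
  (((α:ℂ) + β + 1) * t^2 + ((α:ℂ) - β) * t) / (1 - t^2)

lemma eventually_ne (t : ℂ) (ht : t ≠ 0) : ∀ᶠ x in nhds t, x ≠ 0 := isOpen_ne.mem_nhds ht

lemma hasDeriv_inv_comp (f : ℂ → ℂ) (t : ℂ) (ht : t ≠ 0) (hf : DifferentiableAt ℂ f t⁻¹) :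
    HasDerivAt (fun x => f x⁻¹) (deriv f t⁻¹ * (-(t^2)⁻¹)) t :=
  HasDerivAt.comp t hf.hasDerivAt (hasDerivAt_inv ht)

lemma cF_inv (α β : ℝ) (t : ℂ) (ht : t ≠ 0) (ht2 : t^2 ≠ 1) :
    cF α β t⁻¹ = - cF α β t - ((α:ℂ) + β + 1) := by
  unfold cF
  have h1 : 1 - t^2 ≠ 0 := sub_ne_zero.2 (Ne.symm ht2)
  have h2 : t^2 - 1 ≠ 0 := sub_ne_zero.2 ht2
  have : 1 - (t⁻¹)^2 = (t^2-1)/t^2 := by field_simp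
  rw [this]
  field_simp
  rw [show t^2 - 1 = -(1-t^2) by ring]
  field_simp
  ring

lemma cF_mul (α β : ℝ) (t : ℂ) (ht2 : t^2 ≠ 1) :
    cF α β t * (1 - t^2) = (((α:ℂ) + β + 1) * t^2 + ((α:ℂ) - β) * t) := by
  unfold cF
  have h1 : 1 - t^2 ≠ 0 := sub_ne_zero.2 (Ne.symm ht2)
  field_simp

lemma inv_sq_ne (t : ℂ) (ht2 : t^2 ≠ 1) : (t⁻¹)^2 ≠ 1 := by
  rw [inv_pow]; simpa using ht2

lemma jac_even (α β : ℝ) (hα : -1 < α) (hβ : -1 < β) (l : ℕ) :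
   (jacobiA α β (2*l) : ℂ) * (2*l+1+((α:ℂ)+β+1)) = -((α:ℂ)-β) := by
  have h : jacobiA α β (2*l) * (2*l+1+(α+β+1)) = -(α-β) := by
    have h0 : (0:ℝ) ≤ l := by positivity
    have : (2*l+α+β+2 : ℝ) ≠ 0 := by linarith
    unfold jacobiA
    rw [pow_succ, pow_mul]
    push_cast
    field_simp
    norm_num; ring
  exact_mod_cast h

lemma jac_odd (α β : ℝ) (hα : -1 < α) (hβ : -1 < β) (l : ℕ) :
   (jacobiA α β (2*l+1) : ℂ) * (2*l+2+((α:ℂ)+β+1)) = -((α:ℂ)+β+1) := by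
  have h : jacobiA α β (2*l+1) * (2*l+2+(α+β+1)) = -(α+β+1) := by
    have h0 : (0:ℝ) ≤ l := by positivity
    have : (2*l+1+α+β+2 : ℝ) ≠ 0 := by linarith
    unfold jacobiA
    rw [show 2*l+1+1 = 2*(l+1) by ring, pow_mul]
    push_cast
    field_simp
    norm_num; ring
  exact_mod_cast h

/-- step B -/
lemma stepB (α β : ℝ) (hα : -1 < α) (hβ : -1 < β) (l : ℕ)
    (hu : ∀ t : ℂ, t ≠ 0 → t^2 ≠ 1 →
      t * deriv (uF α β l) t + cF α β t * (uF α β l t⁻¹ - uF α β l t) = -(l:ℂ) * uF α β l t)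
    (t : ℂ) (ht : t ≠ 0) (ht2 : t^2 ≠ 1) :
      t * deriv (vF α β l) t + cF α β t * (vF α β l t⁻¹ - vF α β l t)
        = ((l:ℂ) + 1 + (α + β + 1)) * vF α β l t := by
  have hd : HasDerivAt (vF α β l) (1 * uF α β l t⁻¹ + t * (deriv (uF α β l) t⁻¹ * (-(t^2)⁻¹))
      - (jacobiA α β (2*l) : ℂ) * deriv (uF α β l) t) t := by
    have := ((hasDerivAt_id t).mul (hasDeriv_inv_comp _ t ht (uF_diff α β l t⁻¹ (inv_ne_zero ht)))).sub
      (((uF_diff α β l t ht).hasDerivAt).const_mul (jacobiA α β (2*l) : ℂ))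
    refine this.congr_of_eventuallyEq ?_
    filter_upwards [eventually_ne t ht] with x hx
    exact vF_eq α β l x hx
  rw [hd.deriv, vF_eq _ _ _ _ ht, vF_eq _ _ _ _ (inv_ne_zero ht), inv_inv]
  have e1 := hu t ht ht2
  have e2 := hu t⁻¹ (inv_ne_zero ht) (inv_sq_ne t ht2)
  rw [inv_inv, cF_inv α β t ht ht2] at e2
  have e3 := cF_mul α β t ht2
  have e4 := jac_even α β hα hβ l
  generalize deriv (uF α β l) t⁻¹ = A at *
  generalize deriv (uF α β l) t = B at *
  generalize uF α β l t⁻¹ = X at *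
  generalize uF α β l t = Y at *
  generalize (jacobiA α β (2*l) : ℂ) = J at *
  generalize cF α β t = c at *
  field_simp
  field_simp at e2
  linear_combination (-J*t) * e1 - t * e2 + Y * e3 + t * Y * e4

lemma stepA (α β : ℝ) (hα : -1 < α) (hβ : -1 < β) (l : ℕ)
    (hv : ∀ t : ℂ, t ≠ 0 → t^2 ≠ 1 →
      t * deriv (vF α β l) t + cF α β t * (vF α β l t⁻¹ - vF α β l t)
        = ((l:ℂ) + 1 + (α + β + 1)) * vF α β l t)
    (t : ℂ) (ht : t ≠ 0) (ht2 : t^2 ≠ 1) :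
      t * deriv (uF α β (l+1)) t + cF α β t * (uF α β (l+1) t⁻¹ - uF α β (l+1) t)
        = -((l:ℂ)+1) * uF α β (l+1) t := by
  have hd : HasDerivAt (uF α β (l+1)) ((deriv (vF α β l) t⁻¹ * (-(t^2)⁻¹))
      - (jacobiA α β (2*l+1) : ℂ) * deriv (vF α β l) t) t := by
    have := ((hasDeriv_inv_comp _ t ht (vF_diff α β l t⁻¹ (inv_ne_zero ht)))).sub
      (((vF_diff α β l t ht).hasDerivAt).const_mul (jacobiA α β (2*l+1) : ℂ))
    refine this.congr_of_eventuallyEq ?_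
    filter_upwards [eventually_ne t ht] with x hx
    exact uF_succ α β l x hx
  rw [hd.deriv, uF_succ _ _ _ _ ht, uF_succ _ _ _ _ (inv_ne_zero ht), inv_inv]
  have e1 := hv t ht ht2
  have e2 := hv t⁻¹ (inv_ne_zero ht) (inv_sq_ne t ht2)
  rw [inv_inv, cF_inv α β t ht ht2] at e2
  have e4 := jac_odd α β hα hβ l
  generalize deriv (vF α β l) t⁻¹ = A at *
  generalize deriv (vF α β l) t = B at *
  generalize vF α β l t⁻¹ = X at *
  generalize vF α β l t = Y at *
  generalize (jacobiA α β (2*l+1) : ℂ) = J at *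
  generalize cF α β t = c at *
  field_simp
  field_simp at e2
  linear_combination (-J*t) * e1 - e2 - t * Y * e4

lemma hu (α β : ℝ) (hα : -1 < α) (hβ : -1 < β) (l : ℕ) : ∀ t : ℂ, t ≠ 0 → t^2 ≠ 1 →
      t * deriv (uF α β l) t + cF α β t * (uF α β l t⁻¹ - uF α β l t) = -(l:ℂ) * uF α β l t := by
  induction l with
  | zero =>
    intro t ht ht2
    have : uF α β 0 = fun _ => 1 := by funext t; simp [uF, Phi_zero']
    simp [this]
  | succ l ih =>
    intro t ht ht2
    rw [stepA α β hα hβ l (stepB α β hα hβ l ih) t ht ht2]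
    push_cast; ring

lemma hv (α β : ℝ) (hα : -1 < α) (hβ : -1 < β) (l : ℕ) : ∀ t : ℂ, t ≠ 0 → t^2 ≠ 1 →
      t * deriv (vF α β l) t + cF α β t * (vF α β l t⁻¹ - vF α β l t)
        = ((l:ℂ) + 1 + (α + β + 1)) * vF α β l t :=
  stepB α β hα hβ l (hu α β hα hβ l)

lemma q_prim (N : ℕ) (hN : 1 ≤ N) : IsPrimitiveRoot (qN N) N :=
  Complex.isPrimitiveRoot_exp N (by omega)

lemma sum_pow_q (N : ℕ) (hN : 1 ≤ N) (j : ℕ) :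
    ∑ k ∈ Finset.range N, (qN N ^ k) ^ j = if N ∣ j then (N:ℂ) else 0 := by
  have hq := q_prim N hN
  have : ∀ k, (qN N ^ k) ^ j = (qN N ^ j)^k := fun k => by rw [← pow_mul, ← pow_mul, mul_comm]
  simp_rw [this]
  split_ifs with h
  · rw [(hq.pow_eq_one_iff_dvd j).2 h]; simp
  · have h1 : qN N ^ j ≠ 1 := fun h' => h ((hq.pow_eq_one_iff_dvd j).1 h')
    rw [geom_sum_eq h1, ← pow_mul, mul_comm, pow_mul, hq.pow_eq_one]; simp

lemma T_sum (N : ℕ) (hN : 1 ≤ N) (m : ℕ) (hm : 1 ≤ m) (hmN : m ≤ N) (w : ℂ) (hw : w ^ N ≠ 1) :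
    ∑ k ∈ Finset.range N, (qN N ^ k) ^ m / (qN N ^ k - w) = N * w ^ (m-1) / (1 - w^N) := by
  have hq := q_prim N hN
  have h1 : 1 - w^N ≠ 0 := sub_ne_zero.2 (Ne.symm hw)
  have key : ∀ k, (qN N ^ k) ^ m / (qN N ^ k - w)
     = (∑ i ∈ Finset.range N, w^(N-1-i) * (qN N ^ k)^(m+i)) / (1 - w^N) := by
    intro k
    have hx : (qN N ^ k)^N = 1 := by rw [← pow_mul, mul_comm, pow_mul, hq.pow_eq_one, one_pow]
    have hne : qN N ^ k - w ≠ 0 := by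
      intro h; rw [sub_eq_zero] at h; rw [h] at hx; exact hw hx
    rw [div_eq_div_iff hne h1, ← hx, ← geom_sum₂_mul]
    rw [← mul_assoc, Finset.mul_sum]
    congr 1
    refine Finset.sum_congr rfl fun i _ => ?_
    ring
  simp_rw [key]
  rw [← Finset.sum_div, Finset.sum_comm]
  congr 1
  simp_rw [← Finset.mul_sum, sum_pow_q N hN]
  rw [Finset.sum_eq_single (N-m)]
  · rw [if_pos (by rw [Nat.add_sub_cancel' hmN])]
    rw [show N - 1 - (N-m) = m - 1 by omega]; ring
  · intro i hi hne
    rw [if_neg, mul_zero]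
    rintro ⟨r, hr⟩
    have := Finset.mem_range.1 hi
    have : r = 1 := by
      have h1 : 0 < r := by rcases Nat.eq_zero_or_pos r with h | h; (subst h; omega); exact h
      have h2 : r < 2 := by
        by_contra h3
        have : N * 2 ≤ N * r := Nat.mul_le_mul_left _ (by omega)
        omega
      omega
    subst this; omega
  · intro h; exfalso; apply h; rw [Finset.mem_range]; omega

lemma A_form (α β : ℝ) (N : ℕ) (hN : 1 ≤ N) : ∃ h s : ℕ, 1 ≤ h ∧ h ≤ N ∧ 1 ≤ s ∧ s ≤ 2 ∧ 2*h+s = N+2 ∧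
    ∀ k z, Acoef α β N k z = (((α:ℂ)+β+1) * z^2 + ((α:ℂ)-β) * z^s * (qN N ^ k)^h) / (qN N ^ k - z^2) := by
  have hq := q_prim N hN
  have hq0 : qN N ≠ 0 := Complex.exp_ne_zero _
  rcases Nat.even_or_odd N with he | ho
  · obtain ⟨M, hM⟩ := he
    refine ⟨M, 2, by omega, by omega, by omega, by omega, by omega, ?_⟩
    intro k z
    have hm1 : qN N ^ M = -1 := by
      have : (qN N ^ M)^2 = 1 := by rw [← pow_mul, show M*2 = N by omega, hq.pow_eq_one]
      rcases mul_self_eq_one_iff.1 ((sq _).symm.trans this) with h | h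
      · exfalso
        have := Nat.le_of_dvd (by omega) ((hq.pow_eq_one_iff_dvd M).1 h); omega
      · exact h
    unfold Acoef
    rw [if_pos ⟨M, hM⟩, ← pow_mul, mul_comm k M, pow_mul, hm1]
    ring
  · obtain ⟨M, hM⟩ := ho
    refine ⟨M+1, 1, by omega, by omega, by omega, by omega, by omega, ?_⟩
    intro k z
    unfold Acoef
    rw [if_neg (by rw [Nat.not_even_iff_odd]; exact ⟨M, hM⟩)]
    have hz : qN N ^ (N:ℤ) = 1 := by rw [zpow_natCast]; exact hq.pow_eq_one
    have : (if Even k then qN N ^ ((k : ℤ) / 2) else qN N ^ (((k : ℤ) - (N : ℤ)) / 2))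
       = (qN N ^ k)^(M+1) := by
      rw [← pow_mul, ← zpow_natCast]
      split_ifs with hk
      · obtain ⟨r, hr⟩ := hk
        have : ((k * (M+1) : ℕ) : ℤ) = (k:ℤ)/2 + N * r := by
          have : (k:ℤ)/2 = r := by omega
          rw [this, hM, hr]; push_cast; ring
        rw [this, zpow_add₀ hq0, zpow_mul, hz, one_zpow, mul_one]
      · rw [Nat.not_even_iff_odd] at hk
        obtain ⟨r, hr⟩ := hk
        have : ((k * (M+1) : ℕ) : ℤ) = ((k:ℤ)-N)/2 + N * (r+1) := by
          have : ((k:ℤ)-N)/2 = r - M := by omega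
          rw [this, hM, hr]; push_cast; ring
        rw [this, zpow_add₀ hq0, zpow_mul, hz, one_zpow, mul_one]
    rw [this]
    ring

lemma S_pos (α β : ℝ) (N : ℕ) (hN : 1 ≤ N) (m : ℕ) (hm : 1 ≤ m) (hmN : 2*m ≤ N) (z : ℂ)
    (hz2 : z ^ (2*N) ≠ 1) :
    ∑ k ∈ Finset.range N, Acoef α β N k z * (qN N ^ k)^m
      = z^(2*m) * (N * (cF α β (z^N) + (α+β+1))) := by
  obtain ⟨h, s, h1, h2, h3, h4, h5, hA⟩ := A_form α β N hN
  have hw : (z^2)^N ≠ 1 := by rwa [← pow_mul]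
  have hd : 1 - (z^N)^2 ≠ 0 := by
    rw [← pow_mul, mul_comm]; exact sub_ne_zero.2 (Ne.symm hz2)
  have key : ∀ k, Acoef α β N k z * (qN N ^ k)^m =
     ((α:ℂ)+β+1) * z^2 * ((qN N ^ k)^m / (qN N ^ k - z^2))
     + ((α:ℂ)-β) * z^s * ((qN N ^ k)^(m+h) / (qN N ^ k - z^2)) := by
    intro k; rw [hA, pow_add]; ring
  simp_rw [key]
  rw [Finset.sum_add_distrib, ← Finset.mul_sum, ← Finset.mul_sum, T_sum N hN m hm (by omega) _ hw,
    T_sum N hN (m+h) (by omega) (by omega) _ hw]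
  unfold cF
  have e1 : z^2 * (z^2)^(m-1) = z^(2*m) := by
    rw [← pow_mul, ← pow_add]; congr 1; omega
  have e2 : z^s * (z^2)^(m+h-1) = z^(2*m) * z^N := by
    rw [← pow_mul, ← pow_add, ← pow_add]; congr 1; omega
  have e3 : (z^2)^N = (z^N)^2 := by rw [← pow_mul, ← pow_mul, mul_comm]
  rw [e3]
  field_simp
  linear_combination (N:ℂ) * ((α:ℂ)+β+1) * e1 + (N:ℂ) * ((α:ℂ)-β) * e2

lemma S_neg (α β : ℝ) (N : ℕ) (hN : 1 ≤ N) (m : ℕ) (hmN : 2*m < N) (z : ℂ) (hz : z ≠ 0)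
    (hz2 : z ^ (2*N) ≠ 1) :
    ∑ k ∈ Finset.range N, Acoef α β N k z * ((qN N ^ k)^m)⁻¹
      = (z^(2*m))⁻¹ * (N * cF α β (z^N)) := by
  obtain ⟨h, s, h1, h2, h3, h4, h5, hA⟩ := A_form α β N hN
  have hq := q_prim N hN
  have hq0 : qN N ≠ 0 := Complex.exp_ne_zero _
  have hw : (z^2)^N ≠ 1 := by rwa [← pow_mul]
  have hd : 1 - (z^N)^2 ≠ 0 := by
    rw [← pow_mul, mul_comm]; exact sub_ne_zero.2 (Ne.symm hz2)
  have key : ∀ k, Acoef α β N k z * ((qN N ^ k)^m)⁻¹ =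
     ((α:ℂ)+β+1) * z^2 * ((qN N ^ k)^(N-m) / (qN N ^ k - z^2))
     + ((α:ℂ)-β) * z^s * ((qN N ^ k)^(h-m) / (qN N ^ k - z^2)) := by
    intro k
    have hx : (qN N ^ k)^N = 1 := by rw [← pow_mul, mul_comm, pow_mul, hq.pow_eq_one, one_pow]
    have hx0 : qN N ^ k ≠ 0 := pow_ne_zero _ hq0
    rw [hA, pow_sub₀ _ hx0 (show m ≤ N by omega), pow_sub₀ _ hx0 (show m ≤ h by omega), hx]; ring
  simp_rw [key]
  rw [Finset.sum_add_distrib, ← Finset.mul_sum, ← Finset.mul_sum, T_sum N hN (N-m) (by omega) (by omega) _ hw,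
    T_sum N hN (h-m) (by omega) (by omega) _ hw]
  unfold cF
  have hz0 : z^(2*m) ≠ 0 := pow_ne_zero _ hz
  have e1 : z^2 * (z^2)^(N-m-1) * z^(2*m) = (z^N)^2 := by
    rw [← pow_mul, ← pow_add, ← pow_add, ← pow_mul]; congr 1; omega
  have e2 : z^s * (z^2)^(h-m-1) * z^(2*m) = z^N := by
    rw [← pow_mul, ← pow_add, ← pow_add]; congr 1; omega
  have e3 : (z^2)^N = (z^N)^2 := by rw [← pow_mul, ← pow_mul, mul_comm]
  rw [e3]
  field_simp
  linear_combination (N:ℂ) * ((α:ℂ)+β+1) * e1 + (N:ℂ) * ((α:ℂ)-β) * e2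

lemma L_class (α β : ℝ) (N : ℕ) (e : ℤ) (f g : ℂ → ℂ)
    (hf : ∀ z : ℂ, z ≠ 0 → f z = z ^ e * g (z^N)) (hg : ∀ t : ℂ, t ≠ 0 → DifferentiableAt ℂ g t)
    (hN : 1 ≤ N) (z : ℂ) (hz : z ≠ 0) :
    Lop α β N f z = z^e * (e * g (z^N) + N * (z^N * deriv g (z^N)))
      + (∑ k ∈ Finset.range N, Acoef α β N k z * (qN N ^ k)^e) * ((z^e)⁻¹ * g (z^N)⁻¹)
      - (∑ k ∈ Finset.range N, Acoef α β N k z) * (z^e * g (z^N)) := by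
  have hq := q_prim N hN
  have hq0 : qN N ≠ 0 := Complex.exp_ne_zero _
  have hd : HasDerivAt f ((e * z^(e-1)) * g (z^N) + z^e * (deriv g (z^N) * (N * z^(N-1)))) z := by
    have h1 : HasDerivAt (fun x : ℂ => g (x^N)) (deriv g (z^N) * (N * z^(N-1))) z :=
      HasDerivAt.comp z (hg (z^N) (pow_ne_zero _ hz)).hasDerivAt (hasDerivAt_pow N z)
    refine ((hasDerivAt_zpow e z (Or.inl hz)).mul h1).congr_of_eventuallyEq ?_
    filter_upwards [eventually_ne z hz] with x hx
    exact hf x hx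
  unfold Lop
  rw [hd.deriv]
  have key : ∀ k, Acoef α β N k z * (f (qN N ^ k / z) - f z)
     = (Acoef α β N k z * (qN N ^ k)^e) * ((z^e)⁻¹ * g (z^N)⁻¹)
        - Acoef α β N k z * (z^e * g (z^N)) := by
    intro k
    have hx : (qN N ^ k)^N = 1 := by rw [← pow_mul, mul_comm, pow_mul, hq.pow_eq_one, one_pow]
    rw [hf _ (div_ne_zero (pow_ne_zero _ hq0) hz), hf z hz, div_zpow, div_pow, hx, one_div]
    ring
  simp_rw [key]
  rw [Finset.sum_sub_distrib, ← Finset.sum_mul, ← Finset.sum_mul]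
  have e1 : z * z^(e-1) = z^e := by rw [mul_comm, zpow_sub_one₀ hz]; field_simp
  have e2 : z * z^(N-1) = z^N := by rw [mul_comm, ← pow_succ]; congr 1; omega
  linear_combination (e * g (z^N)) * e1 + (z^e * deriv g (z^N) * N) * e2

def Eig (α β : ℝ) (N : ℕ) (f : ℂ → ℂ) (μ : ℂ) : Prop :=
  (∀ z : ℂ, z ≠ 0 → DifferentiableAt ℂ f z) ∧
  ∀ z : ℂ, z ≠ 0 → z^(2*N) ≠ 1 → Lop α β N f z = μ * f z

lemma class_diff (N : ℕ) (e : ℤ) (f g : ℂ → ℂ)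
    (hf : ∀ z : ℂ, z ≠ 0 → f z = z ^ e * g (z^N)) (hg : ∀ t : ℂ, t ≠ 0 → DifferentiableAt ℂ g t) :
    ∀ z : ℂ, z ≠ 0 → DifferentiableAt ℂ f z := by
  intro z hz
  have h1 : DifferentiableAt ℂ (fun x : ℂ => g (x^N)) z :=
      DifferentiableAt.comp z (hg (z^N) (pow_ne_zero _ hz)) (by fun_prop)
  have h2 : DifferentiableAt ℂ (fun x : ℂ => x ^ e) z := differentiableAt_zpow.2 (Or.inl hz)
  refine (h2.mul h1).congr_of_eventuallyEq ?_
  filter_upwards [eventually_ne z hz] with x hx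
  exact hf x hx

lemma S_zero (α β : ℝ) (N : ℕ) (hN : 1 ≤ N) (z : ℂ) (hz : z ≠ 0)
    (hz2 : z ^ (2*N) ≠ 1) :
    ∑ k ∈ Finset.range N, Acoef α β N k z = N * cF α β (z^N) := by
  have := S_neg α β N hN 0 (by omega) z hz hz2
  simpa using this

lemma eig_pos (α β : ℝ) (N : ℕ) (hN : 1 ≤ N) (m : ℕ) (hm : 1 ≤ m) (hmN : 2*m ≤ N) (f u : ℂ → ℂ)
    (μ lam : ℂ)
    (hf : ∀ z : ℂ, z ≠ 0 → f z = z ^ m * u (z^N)⁻¹) (hu : ∀ t : ℂ, t ≠ 0 → DifferentiableAt ℂ u t)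
    (H : ∀ t : ℂ, t ≠ 0 → t^2 ≠ 1 → t * deriv u t + cF α β t * (u t⁻¹ - u t) = lam * u t)
    (hμ : μ = N * ((α:ℂ)+β+1) - (N * lam - m)) : Eig α β N f μ := by
  have hf' : ∀ z : ℂ, z ≠ 0 → f z = z ^ (m:ℤ) * (fun t => u t⁻¹) (z^N) := by
    intro z hz; rw [zpow_natCast]; exact hf z hz
  have hg : ∀ t : ℂ, t ≠ 0 → DifferentiableAt ℂ (fun t => u t⁻¹) t := fun t ht =>
    (hasDeriv_inv_comp u t ht (hu _ (inv_ne_zero ht))).differentiableAt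
  refine ⟨class_diff N m f _ hf' hg, fun z hz hz2 => ?_⟩
  rw [L_class α β N m f _ hf' hg hN z hz, S_zero α β N hN z hz hz2, hf z hz]
  simp_rw [zpow_natCast]
  rw [S_pos α β N hN m hm hmN z hz2]
  have ht : z^N ≠ 0 := pow_ne_zero _ hz
  have ht2 : (z^N)^2 ≠ 1 := by rwa [← pow_mul, mul_comm]
  rw [(hasDeriv_inv_comp u (z^N) ht (hu _ (inv_ne_zero ht))).deriv, inv_inv]
  have e2 := H (z^N)⁻¹ (inv_ne_zero ht) (inv_sq_ne _ ht2)
  rw [inv_inv, cF_inv α β _ ht ht2] at e2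
  rw [hμ, Int.cast_natCast, show z^(2*m) = z^m * z^m by rw [two_mul, pow_add]]
  have hzm : z^m ≠ 0 := pow_ne_zero _ hz
  generalize deriv u (z^N)⁻¹ = A at *
  generalize u (z^N)⁻¹ = X at *
  generalize u (z^N) = Y at *
  generalize cF α β (z^N) = c at *
  generalize z^N = t at *
  generalize z^m = y at *
  field_simp
  field_simp at e2
  linear_combination (-(N:ℂ)) * e2

lemma eig_neg (α β : ℝ) (N : ℕ) (hN : 1 ≤ N) (m : ℕ) (hmN : 2*m < N) (f u : ℂ → ℂ)
    (μ lam : ℂ)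
    (hf : ∀ z : ℂ, z ≠ 0 → f z = (z ^ m)⁻¹ * u (z^N)) (hu : ∀ t : ℂ, t ≠ 0 → DifferentiableAt ℂ u t)
    (H : ∀ t : ℂ, t ≠ 0 → t^2 ≠ 1 → t * deriv u t + cF α β t * (u t⁻¹ - u t) = lam * u t)
    (hμ : μ = N * lam - m) : Eig α β N f μ := by
  have hf' : ∀ z : ℂ, z ≠ 0 → f z = z ^ (-(m:ℤ)) * u (z^N) := by
    intro z hz; rw [zpow_neg, zpow_natCast]; exact hf z hz
  refine ⟨class_diff N _ f _ hf' hu, fun z hz hz2 => ?_⟩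
  rw [L_class α β N _ f _ hf' hu hN z hz, S_zero α β N hN z hz hz2, hf z hz]
  simp_rw [zpow_neg, zpow_natCast]
  rw [S_neg α β N hN m hmN z hz hz2]
  have ht : z^N ≠ 0 := pow_ne_zero _ hz
  have ht2 : (z^N)^2 ≠ 1 := by rwa [← pow_mul, mul_comm]
  have e2 := H (z^N) ht ht2
  rw [hμ, Int.cast_neg, Int.cast_natCast, show z^(2*m) = z^m * z^m by rw [two_mul, pow_add]]
  have hzm : z^m ≠ 0 := pow_ne_zero _ hz
  generalize deriv u (z^N) = A at *
  generalize u (z^N)⁻¹ = X at *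
  generalize u (z^N) = Y at *
  generalize cF α β (z^N) = c at *
  generalize z^N = t at *
  generalize z^m = y at *
  field_simp
  linear_combination (N:ℂ) * e2

lemma L_lin (α β : ℝ) (N : ℕ) (hN : 1 ≤ N) (P f g : ℂ → ℂ) (x y : ℂ)
    (hf : ∀ z : ℂ, z ≠ 0 → DifferentiableAt ℂ f z) (hg : ∀ z : ℂ, z ≠ 0 → DifferentiableAt ℂ g z)
    (hP : ∀ z : ℂ, z ≠ 0 → z^(2*N) ≠ 1 → P z = x * f z + y * g z)
    (z : ℂ) (hz : z ≠ 0) (hz2 : z^(2*N) ≠ 1) :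
    Lop α β N P z = x * Lop α β N f z + y * Lop α β N g z := by
  have hq := q_prim N hN
  have hq0 : qN N ≠ 0 := Complex.exp_ne_zero _
  have hd : HasDerivAt P (x * deriv f z + y * deriv g z) z := by
    refine (((hf z hz).hasDerivAt.const_mul x).add
      ((hg z hz).hasDerivAt.const_mul y)).congr_of_eventuallyEq ?_
    have ho : ∀ᶠ w : ℂ in nhds z, w^(2*N) ≠ 1 :=
      (continuous_pow (2*N)).continuousAt.eventually_ne hz2
    filter_upwards [eventually_ne z hz, ho] with w h1 h2
    exact hP w h1 h2
  unfold Lop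
  rw [hd.deriv]
  have key : ∀ k, Acoef α β N k z * (P (qN N ^ k / z) - P z)
     = x * (Acoef α β N k z * (f (qN N ^ k / z) - f z))
      + y * (Acoef α β N k z * (g (qN N ^ k / z) - g z)) := by
    intro k
    have hx : (qN N ^ k)^(2*N) = 1 := by
      rw [← pow_mul, show k*(2*N) = N*(2*k) by ring, pow_mul, hq.pow_eq_one, one_pow]
    rw [hP z hz hz2, hP _ (div_ne_zero (pow_ne_zero _ hq0) hz)]
    · ring
    · rw [div_pow, hx, one_div]; simpa using hz2
  simp_rw [key]
  rw [Finset.sum_add_distrib, ← Finset.mul_sum, ← Finset.mul_sum]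
  ring

lemma eig_comb (α β : ℝ) (N : ℕ) (hN : 1 ≤ N) (P f g : ℂ → ℂ) (x n : ℂ)
    (hf : Eig α β N f (n + N * ((α:ℂ)+β+1))) (hg : Eig α β N g (-n))
    (hP : ∀ z : ℂ, z ≠ 0 → P z = g z + x * f z)
    (z : ℂ) (hz : z ≠ 0) (hz2 : z^(2*N) ≠ 1) :
    Lop α β N (Lop α β N P) z - (N : ℂ) * ((α : ℂ) + β + 1) * Lop α β N P z
      = n * (n + N * ((α:ℂ)+β+1)) * P z := by
  have h1 : ∀ z : ℂ, z ≠ 0 → z^(2*N) ≠ 1 →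
      Lop α β N P z = (x * (n + N * ((α:ℂ)+β+1))) * f z + (-n) * g z := by
    intro z hz hz2
    rw [L_lin α β N hN P f g x 1 hf.1 hg.1 (fun z h _ => by rw [hP z h]; ring) z hz hz2,
      hf.2 z hz hz2, hg.2 z hz hz2]
    ring
  rw [L_lin α β N hN _ f g _ _ hf.1 hg.1 h1 z hz hz2, h1 z hz hz2, hf.2 z hz hz2, hg.2 z hz hz2,
    hP z hz]
  ring

lemma Phi_sieved (α β : ℝ) (N : ℕ) (hN : 1 ≤ N) (k : ℕ) : ∀ j : ℕ, j < N → ∀ z : ℂ, z ≠ 0 →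
    Phi (sievedA α β N) (N*k+j) z = z^j * Phi (jacobiA α β) k (z^N) := by
  have inner : ∀ k, (∀ z : ℂ, z ≠ 0 → Phi (sievedA α β N) (N*k) z = Phi (jacobiA α β) k (z^N)) →
     ∀ j : ℕ, j < N → ∀ z : ℂ, z ≠ 0 →
      Phi (sievedA α β N) (N*k+j) z = z^j * Phi (jacobiA α β) k (z^N) := by
    intro k h0 j
    induction j with
    | zero => intro _ z hz; simpa using h0 z hz
    | succ j ih =>
      intro hj z hz
      have h0 : sievedA α β N (N*k+j) = 0 := by
        unfold sievedA
        rw [if_neg]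
        rw [add_assoc, Nat.dvd_add_right (Dvd.intro _ rfl)]
        intro h
        have := Nat.le_of_dvd (by omega) h
        omega
      rw [← add_assoc, Phi_succ', h0, ih (by omega) z hz]
      simp; ring
  have base : ∀ z : ℂ, z ≠ 0 → Phi (sievedA α β N) (N*k) z = Phi (jacobiA α β) k (z^N) := by
    induction k with
    | zero => intro z _; simp [Phi_zero']
    | succ k ih =>
      intro z hz
      have h0 : sievedA α β N (N*k+(N-1)) = jacobiA α β k := by
        unfold sievedA
        have : N*k+(N-1)+1 = N*(k+1) := by rw [mul_add]; omega
        rw [this, if_pos (Dvd.intro _ rfl), Nat.mul_div_cancel_left _ (by omega)]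
        simp
      have hh : N*(k+1) = N*k+(N-1)+1 := by rw [mul_add]; omega
      rw [hh, Phi_succ', h0, inner k ih (N-1) (by omega) z hz,
        inner k ih (N-1) (by omega) z⁻¹ (inv_ne_zero hz), Phi_succ', inv_pow, inv_pow, pow_add,
        pow_mul]
      have e2 : z * z^(N-1) = z^N := by rw [mul_comm, ← pow_succ]; congr 1; omega
      have e3 : z^(N-1) ≠ 0 := pow_ne_zero _ hz
      rw [← mul_assoc, e2]
      generalize Phi (jacobiA α β) k (z^N)⁻¹ = A
      field_simp
  exact inner k base

lemma sieved_zero (α β : ℝ) (N k j : ℕ) (hj : j + 1 < N) : sievedA α β N (N*k+j) = 0 := by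
  unfold sievedA
  rw [if_neg]
  rw [add_assoc, Nat.dvd_add_right (Dvd.intro _ rfl)]
  intro h
  have := Nat.le_of_dvd (by omega) h
  omega

lemma sieved_last (α β : ℝ) (N k j : ℕ) (hj : j + 1 = N) :
    sievedA α β N (N*k+j) = jacobiA α β k := by
  unfold sievedA
  have : N*k+j+1 = N*(k+1) := by rw [mul_add]; omega
  rw [this, if_pos (Dvd.intro _ rfl), Nat.mul_div_cancel_left _ (by omega)]
  simp

lemma psi_odd (c : ℕ → ℝ) (p : ℕ) (z : ℂ) :
    psi c (2*p+1) z = (z^p)⁻¹ * Phi c (2*p+1) z := by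
  unfold psi
  rw [if_neg (by simp), show (2*p+1)/2 = p by omega, zpow_neg, zpow_natCast]

lemma psi_even (c : ℕ → ℝ) (p : ℕ) (z : ℂ) (hz : z ≠ 0) :
    psi c (2*p+2) z = psi c (2*p+1) z⁻¹ - c (2*p+1) * psi c (2*p+1) z := by
  rw [psi_odd, psi_odd]
  unfold psi
  rw [if_pos (by simp [parity_simps]), show (2*p+2)/2 = p+1 by omega,
    show 2*p+2 = (2*p+1)+1 by ring, Phi_succ', inv_inv, inv_pow, inv_pow]
  have : z ^ p ≠ 0 := pow_ne_zero _ hz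
  generalize Phi c (2*p+1) z⁻¹ = A
  generalize Phi c (2*p+1) z = B
  field_simp
  ring

/-- the sieved Jacobi polynomial of the first kind
𝒫_n(z) = ψ_{2n}(z;N) + (1 + a_{2n-1}(N)) ψ_{2n-1}(z;N) satisfies
(L(N)² - N(α+β+1)L(N)) 𝒫_n = n(n + N(α+β+1)) 𝒫_n. -/
theorem stmt_14 (α β : ℝ) (hα : -1 < α) (hβ : -1 < β) (N : ℕ) (hN : 1 ≤ N)
    (n : ℕ) (hn : 1 ≤ n) (z : ℂ) (hz : z ≠ 0) (hz2 : z ^ (2 * N) ≠ 1) :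
    Lop α β N (Lop α β N (sievP α β N n)) z
      - (N : ℂ) * ((α : ℂ) + β + 1) * Lop α β N (sievP α β N n) z
      = (n : ℂ) * ((n : ℂ) + (N : ℂ) * ((α : ℂ) + β + 1)) * sievP α β N n z := by
  obtain ⟨p, rfl⟩ : ∃ p, n = p + 1 := ⟨n - 1, by omega⟩
  have hsiev : ∀ z : ℂ, z ≠ 0 → sievP α β N (p+1) z = psi (sievedA α β N) (2*p+2) z
      + (1 + (sievedA α β N (2*p+1) : ℂ)) * psi (sievedA α β N) (2*p+1) z := by
    intro z _
    unfold sievP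
    rw [show 2*(p+1)-1 = 2*p+1 by omega, show 2*(p+1) = 2*p+2 by ring]
  have hjN : (2*p+1) % N < N := Nat.mod_lt _ (by omega)
  have hdm : N * ((2*p+1)/N) + (2*p+1) % N = 2*p+1 := Nat.div_add_mod _ _
  obtain ⟨k, hk⟩ : ∃ k, (2*p+1)/N = k := ⟨_, rfl⟩
  obtain ⟨j, hj⟩ : ∃ j, (2*p+1)%N = j := ⟨_, rfl⟩
  rw [hk, hj] at hdm
  rw [hj] at hjN
  have hX : ∀ z : ℂ, z ≠ 0 → psi (sievedA α β N) (2*p+1) z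
      = (z^p)⁻¹ * (z^j * Phi (jacobiA α β) k (z^N)) := by
    intro z hz
    rw [psi_odd, ← Phi_sieved α β N hN k j hjN z hz, hdm]
  have hu' := hu α β hα hβ
  have hv' := hv α β hα hβ
  refine eig_comb α β N hN _ (psi (sievedA α β N) (2*p+1)) (psi (sievedA α β N) (2*p+2)) _ _
    ?_ ?_ hsiev z hz hz2
  all_goals rcases Nat.even_or_odd' k with ⟨l, rfl | rfl⟩
  all_goals clear hk hj hsiev hz2 hz
  all_goals try
    obtain ⟨m, hm⟩ : ∃ m, j + 1 = 2*m := ⟨p + 1 - N*l, by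
      have : N * (2*l) = 2*(N*l) := by ring
      omega⟩
    have hp : p + 1 = N*l + m := by
      have : N * (2*l) = 2*(N*l) := by ring
      omega
    have hpC : (p:ℂ) + 1 = N*l + m := by exact_mod_cast hp
    have hX' : ∀ z : ℂ, z ≠ 0 → psi (sievedA α β N) (2*p+1) z = z^m * uF α β l (z^N)⁻¹ := by
      intro z hz
      rw [hX z hz]
      unfold uF
      rw [inv_inv, inv_pow, ← pow_mul]
      have h1 : z^p ≠ 0 := pow_ne_zero _ hz
      have h2 : z^(N*l) ≠ 0 := pow_ne_zero _ hz
      have h3 : z^j * z^(N*l) = z^m * z^p := by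
        rw [← pow_add, ← pow_add]; congr 1; omega
      field_simp
      linear_combination Phi (jacobiA α β) (2*l) (z^N) * h3
  all_goals try
    obtain ⟨m, hm⟩ : ∃ m, N = 2*m + 1 + j := ⟨N*(l+1) - (p+1), by
      have : N * (2*l+1) = 2*(N*l) + N := by ring
      have : N * (l+1) = N*l + N := by ring
      omega⟩
    have hp : p + 1 + m = N*l + N := by
      have : N * (2*l+1) = 2*(N*l) + N := by ring
      omega
    have hpC : (p:ℂ) + 1 + m = N*l + N := by exact_mod_cast hp
    have hX' : ∀ z : ℂ, z ≠ 0 → psi (sievedA α β N) (2*p+1) z = (z^m)⁻¹ * vF α β l (z^N) := by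
      intro z hz
      rw [hX z hz]
      unfold vF
      rw [← pow_mul]
      have h1 : z^p ≠ 0 := pow_ne_zero _ hz
      have h2 : z^(N*l) ≠ 0 := pow_ne_zero _ hz
      have h4 : z^m ≠ 0 := pow_ne_zero _ hz
      have h3 : z^j * (z^m * z^(N*l)) = z^p := by
        rw [← pow_add, ← pow_add]; congr 1; omega
      field_simp
      linear_combination Phi (jacobiA α β) (2*l+1) (z^N) * h3
  · -- odd psi, k even
    refine eig_pos α β N hN m (by omega) (by omega) _ (uF α β l) _ (-(l:ℂ)) hX' (uF_diff α β l)
      (hu' l) ?_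
    push_cast
    linear_combination hpC
  · refine eig_neg α β N hN m (by omega) _ (vF α β l) _ _ hX' (vF_diff α β l)
      (hv' l) ?_
    push_cast
    linear_combination hpC
  · rcases Nat.lt_or_ge (j+1) N with h | h
    · refine eig_neg α β N hN m (by omega) _ (uF α β l) _ (-(l:ℂ)) ?_ (uF_diff α β l)
        (hu' l) ?_
      · intro z hz
        rw [psi_even _ _ _ hz, hX' _ (inv_ne_zero hz), ← hdm, sieved_zero α β N _ j h]
        simp
      · push_cast
        linear_combination -hpC
    · refine eig_pos α β N hN m (by omega) (by omega) _ (vF α β l) _ _ ?_ (vF_diff α β l)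
        (hv' l) ?_
      · intro z hz
        have ht : z^N ≠ 0 := pow_ne_zero _ hz
        rw [psi_even _ _ _ hz, hX' _ (inv_ne_zero hz), hX' _ hz, ← hdm,
          sieved_last α β N _ j (by omega), vF_eq α β l _ (inv_ne_zero ht), inv_inv, inv_pow, inv_pow,
          inv_inv]
        have h4 : z^m ≠ 0 := pow_ne_zero _ hz
        have h5 : z^N = z^m * z^m := by rw [← pow_add]; congr 1; omega
        generalize uF α β l (z^N)⁻¹ = A
        generalize uF α β l (z^N) = B
        rw [h5]
        field_simp
      · have hNm : (N:ℂ) = 2 * m := by exact_mod_cast (by omega : N = 2*m)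
        push_cast
        linear_combination -hpC + hNm
  · rcases Nat.lt_or_ge (j+1) N with h | h
    · refine eig_pos α β N hN m (by omega) (by omega) _ (vF α β l) _ _ ?_ (vF_diff α β l)
        (hv' l) ?_
      · intro z hz
        rw [psi_even _ _ _ hz, hX' _ (inv_ne_zero hz), ← hdm, sieved_zero α β N _ j h]
        simp
      · push_cast
        linear_combination -hpC
    · have hm0 : m = 0 := by omega
      subst hm0
      refine eig_neg α β N hN 0 (by omega) _ (uF α β (l+1)) _ _ ?_ (uF_diff α β (l+1))
        (hu' (l+1)) ?_
      · intro z hz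
        have ht : z^N ≠ 0 := pow_ne_zero _ hz
        rw [psi_even _ _ _ hz, hX' _ (inv_ne_zero hz), hX' _ hz, ← hdm,
          sieved_last α β N _ j (by omega), uF_succ α β l _ ht]
        simp
      · push_cast
        push_cast at hpC
        linear_combination -hpC
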